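/- arXiv:math/0403117 — 4 statements merged into one kernel-verified Lean document; each statement's English description precedes it below -/
import Mathlib

section
/- Let N ≥ 1 and let U : 𝕋 → U_N(ℂ) be of the form U(z) = ∑_{k=0}^{D} z^k a_k with a_k ∈ M_N(ℂ) and U(z) unitary for every z ∈ 𝕋. Then there exist M ∈ ℕ, one-dimensional orthogonal projections p_1, …, p_M ∈ M_N(ℂ), and a constant unitary matrix V_0 ∈ U_N(ℂ) such that U(z) = V_0 · ∏_{i=1}^{M} (1_N − p_i + z p_i) for every z ∈ 𝕋. -/
/-!
Elementary factors are split off the polynomial matrix `U` one at a time. If `U(0)` is singular, let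
`p` be the orthogonal projection onto a line in its kernel. Since
`(z (1 - p) + p) (1 - p + z p) = z` and `U(z) (z (1 - p) + p)` vanishes at `0`, dividing by `z`
gives `U(z) = W(z) (1 - p + z p)` with `W` again polynomial and unitary on the circle. As
`det (1 - p + z p) = z`, the degree of the determinant drops by one, so the process terminates.

If `U(0)` is invertible, then `U` is constant: on the circle `U(z)* U(z) = 1`, and for
`D > 0` at least the degree of `U` the coefficient of `z ^ D` in this relation reads
`a₀* a_D = 0`, so `a_D = 0`.
-/

open Matrix Polynomial

section RankOne

variable {n R : Type*} [Fintype n]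

theorem isIdempotentElem_vecMulVec [Semiring R] {v w : n → R} (h : w ⬝ᵥ v = 1) :
    IsIdempotentElem (vecMulVec v w) := by
  rw [IsIdempotentElem, vecMulVec_mul_vecMulVec, h, one_smul]

theorem rank_vecMulVec_eq_one [CommSemiring R] [StrongRankCondition R] {v w : n → R}
    (h : w ⬝ᵥ v = 1) : (vecMulVec v w).rank = 1 := by
  refine le_antisymm (rank_vecMulVec_le v w) ?_
  have compression_eq_one :
      replicateRow Unit w * (vecMulVec v w * replicateCol Unit v) = 1 := by
    ext
    simp [← replicateCol_mulVec, vecMulVec_mulVec, h]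
  calc 1 = (replicateRow Unit w * (vecMulVec v w * replicateCol Unit v)).rank := by
        rw [compression_eq_one, rank_one, Fintype.card_unit]
    _ ≤ (vecMulVec v w * replicateCol Unit v).rank := rank_mul_le_right _ _
    _ ≤ (vecMulVec v w).rank := rank_mul_le_left _ _

theorem exists_isSelfAdjoint_vecMulVec_of_det_eq_zero [DecidableEq n] [Field R] [PartialOrder R]
    [StarRing R] [StarOrderedRing R] {M : Matrix n n R} (hM : M.det = 0) :
    ∃ v w : n → R, w ⬝ᵥ v = 1 ∧ IsSelfAdjoint (vecMulVec v w) ∧ M *ᵥ v = 0 := by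
  obtain ⟨v, hv, hMv⟩ := exists_mulVec_eq_zero_iff.2 hM
  have hvv : star v ⬝ᵥ v ≠ 0 := mt dotProduct_star_self_eq_zero.1 hv
  refine ⟨v, (star v ⬝ᵥ v)⁻¹ • star v, ?_, ?_, hMv⟩
  · rw [smul_dotProduct, smul_eq_mul, inv_mul_cancel₀ hvv]
  · have hstar : star (star v ⬝ᵥ v) = star v ⬝ᵥ v := by
      rw [← star_dotProduct_star, star_star]
    rw [isSelfAdjoint_iff, vecMulVec_smul, star_smul, star_inv₀, hstar, star_eq_conjTranspose,
      conjTranspose_vecMulVec, star_star]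

end RankOne

section Unitary

theorem mem_unitary_of_mul_mem_right {M : Type*} [Monoid M] [StarMul M] {u v : M}
    (hv : v ∈ unitary M) (huv : u * v ∈ unitary M) : u ∈ unitary M := by
  have hu : u = u * v * star v := by rw [mul_assoc, Unitary.mul_star_self_of_mem hv, mul_one]
  exact hu ▸ mul_mem huv (Unitary.star_mem hv)

theorem one_sub_add_smul_mul_one_sub_add_smul {R A : Type*} [CommRing R] [Ring A] [Algebra R A]
    {p : A} (hp : IsIdempotentElem p) (x y : R) :
    (1 - p + x • p) * (1 - p + y • p) = 1 - p + (x * y) • p := by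
  simp [add_mul, mul_add, mul_smul, smul_comm y x, hp.eq, hp.one_sub.eq, hp.mul_one_sub_self,
    hp.one_sub_mul_self]

theorem one_sub_add_smul_mem_unitary {R A : Type*} [CommRing R] [StarRing R] [Ring A] [StarRing A]
    [Algebra R A] [StarModule R A] {p : A} (hp : IsStarProjection p) {z : R} (hz : z ∈ unitary R) :
    1 - p + z • p ∈ unitary A := by
  have hstar : star (1 - p + z • p) = 1 - p + star z • p := by simp [hp.isSelfAdjoint.star_eq]
  have hmul := one_sub_add_smul_mul_one_sub_add_smul (R := R) hp.isIdempotentElem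
  rw [Unitary.mem_iff, hstar, hmul, hmul, Unitary.star_mul_self_of_mem hz,
    Unitary.mul_star_self_of_mem hz, one_smul, sub_add_cancel, and_self]

theorem mem_unitary_of_norm_eq_one {z : ℂ} (hz : ‖z‖ = 1) : z ∈ unitary ℂ := by
  have star_mul_self : star z * z = 1 := by simpa [hz] using Complex.conj_mul' z
  exact Unitary.mem_iff.2 ⟨star_mul_self, mul_comm z (star z) ▸ star_mul_self⟩

theorem infinite_setOf_norm_eq_one : {z : ℂ | ‖z‖ = 1}.Infinite := by
  have hconn := isPreconnected_sphere (by simp [Complex.rank_real_complex]) (0 : ℂ) 1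
  have hsphere : Metric.sphere (0 : ℂ) 1 = {z : ℂ | ‖z‖ = 1} := by ext; simp
  rw [← hsphere]
  exact hconn.infinite_of_nontrivial ⟨1, by simp, -1, by simp, by norm_num⟩

end Unitary

section EvalMatrix

theorem X_smul_matrix_injective {m n R : Type*} [CommSemiring R] :
    Function.Injective fun A : Matrix m n R[X] ↦ (X : R[X]) • A :=
  fun _ _ h ↦ Matrix.ext fun i j ↦ isRegular_X.left (congr_fun₂ h i j)

variable {n R : Type*} [Fintype n] [DecidableEq n]

section CommSemiring

variable [CommSemiring R]

/-- Entrywise evaluation of a polynomial matrix at a scalar. -/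
noncomputable def evalMatrix (z : R) : Matrix n n R[X] →+* Matrix n n R :=
  (evalRingHom z).mapMatrix

theorem evalMatrix_apply (z : R) (A : Matrix n n R[X]) (i j : n) :
    evalMatrix z A i j = (A i j).eval z := rfl

theorem evalMatrix_mapMatrix_C (z : R) (M : Matrix n n R) : evalMatrix z (C.mapMatrix M) = M := by
  ext
  simp [evalMatrix_apply]

theorem evalMatrix_smul (z : R) (q : R[X]) (A : Matrix n n R[X]) :
    evalMatrix z (q • A) = q.eval z • evalMatrix z A := by
  ext
  simp [evalMatrix_apply]

theorem exists_eq_X_smul_of_evalMatrix_zero {A : Matrix n n R[X]} (hA : evalMatrix 0 A = 0) :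
    ∃ B : Matrix n n R[X], A = (X : R[X]) • B := by
  have hdvd : ∀ i j, X ∣ A i j := fun i j ↦
    X_dvd_iff.2 <| (coeff_zero_eq_eval_zero _).trans (congr_fun₂ hA i j)
  choose B hB using hdvd
  exact ⟨of B, Matrix.ext hB⟩

end CommSemiring

variable [CommRing R]

theorem det_evalMatrix (z : R) (A : Matrix n n R[X]) : (evalMatrix z A).det = A.det.eval z :=
  ((evalRingHom z).map_det A).symm

theorem eq_of_infinite_evalMatrix_eq [IsDomain R] {A B : Matrix n n R[X]}
    (h : {z | evalMatrix z A = evalMatrix z B}.Infinite) : A = B :=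
  Matrix.ext fun i j ↦ eq_of_infinite_eval_eq _ _ <| h.mono fun _ hz ↦ by
    exact congr_fun₂ hz i j

end EvalMatrix

section PotapovFactor

variable {n R : Type*} [Fintype n] [DecidableEq n] [CommRing R]

/-- The elementary (Blaschke–Potapov) factor `1 - p + z p` attached to a matrix `p`, as a
matrix of polynomials in `z`. -/
noncomputable def potapovFactor (p : Matrix n n R) : Matrix n n R[X] :=
  1 - C.mapMatrix p + (X : R[X]) • C.mapMatrix p

theorem evalMatrix_potapovFactor (z : R) (p : Matrix n n R) :
    evalMatrix z (potapovFactor p) = 1 - p + z • p := by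
  simp only [potapovFactor, map_add, map_sub, map_one, evalMatrix_smul, evalMatrix_mapMatrix_C,
    eval_X]

theorem potapovFactor_one_sub_mul_potapovFactor {p : Matrix n n R} (hp : IsIdempotentElem p) :
    potapovFactor (1 - p) * potapovFactor p = (X : R[X]) • 1 := by
  have hP : IsIdempotentElem ((C : R →+* R[X]).mapMatrix p) := hp.map _
  simp only [potapovFactor, map_sub, map_one, sub_sub_cancel, add_mul, mul_add, smul_mul_assoc,
    mul_smul_comm, hP.eq, hP.one_sub.eq, hP.mul_one_sub_self, hP.one_sub_mul_self]
  module

theorem det_potapovFactor_vecMulVec {v w : n → R} (h : w ⬝ᵥ v = 1) :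
    (potapovFactor (vecMulVec v w)).det = X := by
  have hmap : C.mapMatrix (vecMulVec v w) = vecMulVec (C ∘ v) (C ∘ w) :=
    Matrix.ext fun _ _ ↦ C_mul
  have hfactor : potapovFactor (vecMulVec v w) =
      1 + replicateCol Unit ((X - 1 : R[X]) • C ∘ v) * replicateRow Unit (C ∘ w) := by
    rw [← vecMulVec_eq, smul_vecMulVec, potapovFactor, hmap]
    module
  rw [hfactor, det_one_add_replicateCol_mul_replicateRow, dotProduct_smul, ← RingHom.map_dotProduct,
    h, map_one, smul_eq_mul, mul_one, add_sub_cancel]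

theorem exists_eq_mul_potapovFactor {p : Matrix n n R} (hp : IsIdempotentElem p)
    {A : Matrix n n R[X]} (hA : evalMatrix 0 A * p = 0) :
    ∃ B : Matrix n n R[X], A = B * potapovFactor p := by
  obtain ⟨B, hB⟩ : ∃ B, A * potapovFactor (1 - p) = (X : R[X]) • B :=
    exists_eq_X_smul_of_evalMatrix_zero <| by
      rw [map_mul, evalMatrix_potapovFactor, sub_sub_cancel, zero_smul, add_zero, hA]
  refine ⟨B, X_smul_matrix_injective ?_⟩
  calc (X : R[X]) • A = A * potapovFactor (1 - p) * potapovFactor p := by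
        rw [mul_assoc, potapovFactor_one_sub_mul_potapovFactor hp, mul_smul_comm, mul_one]
    _ = (X : R[X]) • (B * potapovFactor p) := by rw [hB, smul_mul_assoc]

end PotapovFactor

section Paraconjugate

variable {n R : Type*} [Fintype n] [DecidableEq n] [CommSemiring R] [StarRing R]

theorem eval_reflect_map_star {D : ℕ} {q : R[X]} (hq : q.natDegree ≤ D) {z : R}
    (hz : z ∈ unitary R) :
    ((q.map (starRingEnd R)).reflect D).eval z = z ^ D * star (q.eval z) := by
  let _ : Invertible (star z) :=
    ⟨z, Unitary.mul_star_self_of_mem hz, Unitary.star_mul_self_of_mem hz⟩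
  have hreflect : ((q.map (starRingEnd R)).reflect D).eval z * star z ^ D =
      (q.map (starRingEnd R)).eval (star z) :=
    eval₂_reflect_mul_pow (RingHom.id R) (star z) D _ (natDegree_map_le.trans hq)
  calc ((q.map (starRingEnd R)).reflect D).eval z
      = z ^ D * (((q.map (starRingEnd R)).reflect D).eval z * star z ^ D) := by
        rw [mul_left_comm, ← mul_pow, Unitary.mul_star_self_of_mem hz, one_pow, mul_one]
    _ = z ^ D * star (q.eval z) := by
        rw [hreflect]
        exact congr_arg _ (eval_map_apply (starRingEnd R) z)

/-- The polynomial matrix `z ^ D • A(1 / z̄)ᴴ`, for `A` with entries of degree at most `D`: the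
coefficients are conjugate-transposed and listed in reverse order. -/
noncomputable def paraconjugate (D : ℕ) (A : Matrix n n R[X]) : Matrix n n R[X] :=
  of fun i j ↦ ((A j i).map (starRingEnd R)).reflect D

theorem evalMatrix_paraconjugate {D : ℕ} {A : Matrix n n R[X]}
    (hdeg : ∀ i j, (A i j).natDegree ≤ D) {z : R} (hz : z ∈ unitary R) :
    evalMatrix z (paraconjugate D A) = z ^ D • star (evalMatrix z A) :=
  Matrix.ext fun i j ↦ eval_reflect_map_star (hdeg j i) hz

theorem evalMatrix_zero_paraconjugate_apply (D : ℕ) (A : Matrix n n R[X]) (i j : n) :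
    evalMatrix 0 (paraconjugate D A) i j = star ((A j i).coeff D) := by
  rw [evalMatrix_apply, ← coeff_zero_eq_eval_zero, paraconjugate, of_apply, coeff_reflect,
    revAt_zero, coeff_map, starRingEnd_apply]

end Paraconjugate

section UnitaryOnCircle

variable {n : Type*} [Fintype n] [DecidableEq n] {A B : Matrix n n ℂ[X]}

/-- The polynomial matrix `A` takes unitary values on the unit circle. -/
def IsUnitaryOnCircle (A : Matrix n n ℂ[X]) : Prop :=
  ∀ z : ℂ, ‖z‖ = 1 → evalMatrix z A ∈ unitaryGroup n ℂ

namespace IsUnitaryOnCircle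

theorem det_ne_zero (hA : IsUnitaryOnCircle A) : A.det ≠ 0 := by
  intro hdet
  have hunit : IsUnit (evalMatrix 1 A).det := UnitaryGroup.det_isUnit ⟨_, hA 1 norm_one⟩
  rw [det_evalMatrix, hdet, eval_zero] at hunit
  exact not_isUnit_zero hunit

theorem of_mul_potapovFactor {p : Matrix n n ℂ} (hp : IsStarProjection p)
    (hB : IsUnitaryOnCircle (B * potapovFactor p)) : IsUnitaryOnCircle B := by
  intro z hz
  refine mem_unitary_of_mul_mem_right
    (one_sub_add_smul_mem_unitary hp (mem_unitary_of_norm_eq_one hz)) ?_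
  rw [← evalMatrix_potapovFactor, ← map_mul]
  exact hB z hz

theorem paraconjugate_mul_self (hA : IsUnitaryOnCircle A) {D : ℕ}
    (hdeg : ∀ i j, (A i j).natDegree ≤ D) :
    paraconjugate D A * A = (X ^ D : ℂ[X]) • 1 := by
  refine eq_of_infinite_evalMatrix_eq (infinite_setOf_norm_eq_one.mono fun z hz ↦ ?_)
  rw [Set.mem_ofPred_eq, map_mul, evalMatrix_paraconjugate hdeg (mem_unitary_of_norm_eq_one hz),
    smul_mul_assoc, Unitary.star_mul_self_of_mem (hA z hz), evalMatrix_smul, eval_pow, eval_X,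
    map_one]

theorem coeff_eq_zero_of_det_ne_zero (hA : IsUnitaryOnCircle A) (h0 : (evalMatrix 0 A).det ≠ 0)
    {D : ℕ} (hD : D ≠ 0) (hdeg : ∀ i j, (A i j).natDegree ≤ D) (i j : n) :
    (A i j).coeff D = 0 := by
  have hunit : IsUnit (evalMatrix 0 A) := (isUnit_iff_isUnit_det _).2 h0.isUnit
  have hmul : evalMatrix 0 (paraconjugate D A) * evalMatrix 0 A = 0 := by
    rw [← map_mul, hA.paraconjugate_mul_self hdeg, evalMatrix_smul, eval_pow, eval_X,
      zero_pow hD, zero_smul]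
  have hpara : evalMatrix 0 (paraconjugate D A) = 0 := hunit.mul_left_eq_zero.1 hmul
  rw [← star_eq_zero, ← evalMatrix_zero_paraconjugate_apply, hpara, Matrix.zero_apply]

theorem natDegree_eq_zero_of_det_ne_zero (hA : IsUnitaryOnCircle A)
    (h0 : (evalMatrix 0 A).det ≠ 0) (i j : n) : (A i j).natDegree = 0 := by
  suffices ∀ D, (∀ i j, (A i j).natDegree ≤ D) → (A i j).natDegree = 0 from
    this _ fun k l ↦ Finset.single_le_sum (f := fun x : n × n ↦ (A x.1 x.2).natDegree)
      (fun _ _ ↦ Nat.zero_le _) (Finset.mem_univ (k, l))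
  intro D hdeg
  induction D with
  | zero => exact Nat.le_zero.1 (hdeg i j)
  | succ D ih =>
    have htop := hA.coeff_eq_zero_of_det_ne_zero h0 D.succ_ne_zero hdeg
    exact ih fun k l ↦ natDegree_le_pred (hdeg k l) (htop k l)

theorem exists_eq_mapMatrix_C_of_det_ne_zero (hA : IsUnitaryOnCircle A)
    (h0 : (evalMatrix 0 A).det ≠ 0) : ∃ V ∈ unitaryGroup n ℂ, A = C.mapMatrix V := by
  have hconst : A = C.mapMatrix (of fun i j ↦ (A i j).coeff 0) :=
    Matrix.ext fun i j ↦ eq_C_of_natDegree_eq_zero (hA.natDegree_eq_zero_of_det_ne_zero h0 i j)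
  refine ⟨_, ?_, hconst⟩
  rw [← evalMatrix_mapMatrix_C 1 (of fun i j ↦ (A i j).coeff 0), ← hconst]
  exact hA 1 norm_one

open scoped ComplexOrder in
theorem exists_eq_mul_potapovFactor_of_det_eq_zero (hA : IsUnitaryOnCircle A)
    (h0 : (evalMatrix 0 A).det = 0) :
    ∃ (p : Matrix n n ℂ) (B : Matrix n n ℂ[X]), IsStarProjection p ∧ p.rank = 1 ∧
      IsUnitaryOnCircle B ∧ A = B * potapovFactor p ∧ A.det.natDegree = B.det.natDegree + 1 := by
  obtain ⟨v, w, hwv, hself, hker⟩ := exists_isSelfAdjoint_vecMulVec_of_det_eq_zero h0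
  have hp : IsStarProjection (vecMulVec v w) := ⟨isIdempotentElem_vecMulVec hwv, hself⟩
  obtain ⟨B, rfl⟩ : ∃ B, A = B * potapovFactor (vecMulVec v w) :=
    exists_eq_mul_potapovFactor hp.isIdempotentElem (by rw [mul_vecMulVec, hker, zero_vecMulVec])
  have hB : IsUnitaryOnCircle B := hA.of_mul_potapovFactor hp
  refine ⟨_, B, hp, rank_vecMulVec_eq_one hwv, hB, rfl, ?_⟩
  rw [det_mul, det_potapovFactor_vecMulVec hwv, natDegree_mul_X hB.det_ne_zero]

theorem exists_eq_mul_prod_potapovFactor (hA : IsUnitaryOnCircle A) :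
    ∃ V ∈ unitaryGroup n ℂ, ∃ l : List (Matrix n n ℂ),
      (∀ p ∈ l, IsStarProjection p ∧ p.rank = 1) ∧
        A = C.mapMatrix V * (l.map potapovFactor).prod := by
  induction hd : A.det.natDegree using Nat.strong_induction_on generalizing A with
  | _ d ih =>
  by_cases h0 : (evalMatrix 0 A).det = 0
  · obtain ⟨p, B, hp, hrank, hB, rfl, hdeg⟩ := hA.exists_eq_mul_potapovFactor_of_det_eq_zero h0
    obtain ⟨V, hV, l, hl, hBl⟩ := ih B.det.natDegree (by lia) hB rfl
    refine ⟨V, hV, l ++ [p], ?_, ?_⟩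
    · exact List.forall_mem_append.2 ⟨hl, List.forall_mem_singleton.2 ⟨hp, hrank⟩⟩
    · rw [hBl, List.map_append, List.prod_append, List.map_singleton, List.prod_singleton,
        mul_assoc]
  · obtain ⟨V, hV, hAV⟩ := hA.exists_eq_mapMatrix_C_of_det_ne_zero h0
    exact ⟨V, hV, [], by simp, by simpa using hAV⟩

end IsUnitaryOnCircle

end UnitaryOnCircle

/- STATEMENT 2: Every unitary-valued polynomial matrix function on the circle factors as a
constant unitary `V₀` times an ordered product of factors `1_N − pᵢ + z pᵢ`, where the `pᵢ`
are one-dimensional orthogonal projections. -/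
theorem stmt2 (N D : ℕ) (hN : 1 ≤ N)
    (U : ℂ → Matrix (Fin N) (Fin N) ℂ) (a : ℕ → Matrix (Fin N) (Fin N) ℂ)
    (hform : ∀ z : ℂ, ‖z‖ = 1 → U z = ∑ k ∈ Finset.range (D + 1), z ^ k • a k)
    (hunit : ∀ z : ℂ, ‖z‖ = 1 → U z ∈ Matrix.unitaryGroup (Fin N) ℂ) :
    ∃ (M : ℕ) (p : Fin M → Matrix (Fin N) (Fin N) ℂ) (V₀ : Matrix (Fin N) (Fin N) ℂ),
      V₀ ∈ Matrix.unitaryGroup (Fin N) ℂ ∧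
      (∀ i, (p i).conjTranspose = p i ∧ p i * p i = p i ∧ (p i).rank = 1) ∧
      ∀ z : ℂ, ‖z‖ = 1 →
        U z = V₀ *
          (List.ofFn (fun i : Fin M =>
            (1 : Matrix (Fin N) (Fin N) ℂ) - p i + z • p i)).prod := by
  let A : Matrix (Fin N) (Fin N) ℂ[X] :=
    ∑ k ∈ Finset.range (D + 1), (X ^ k : ℂ[X]) • C.mapMatrix (a k)
  have evalMatrix_A : ∀ z : ℂ, ‖z‖ = 1 → evalMatrix z A = U z := fun z hz ↦ by
    simp only [A, hform z hz, map_sum, evalMatrix_smul, evalMatrix_mapMatrix_C, eval_pow, eval_X]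
  have hA : IsUnitaryOnCircle A := fun z hz ↦ evalMatrix_A z hz ▸ hunit z hz
  obtain ⟨V₀, hV₀, l, hl, hAl⟩ := hA.exists_eq_mul_prod_potapovFactor
  refine ⟨l.length, fun i ↦ l[i], V₀, hV₀, fun i ↦ ?_, fun z hz ↦ ?_⟩
  · obtain ⟨hp, hrank⟩ := hl l[i] (List.getElem_mem _)
    exact ⟨hp.isSelfAdjoint, hp.isIdempotentElem, hrank⟩
  · have hprod := congr_arg (evalMatrix z) hAl
    rw [evalMatrix_A z hz, map_mul, evalMatrix_mapMatrix_C, map_list_prod, List.map_map] at hprod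
    rw [hprod, ← List.ofFn_getElem_eq_map]
    simp only [Function.comp_apply, evalMatrix_potapovFactor, Fin.getElem_fin]
end

section
/- Let N ≥ 2 and let m_0, …, m_{N−1} : 𝕋 → ℂ be continuous functions. For each j define the bounded operator S_j on L²(𝕋, μ) (μ the normalized Haar measure on the circle) by (S_j f)(z) = m_j(z) f(z^N). Then the following are equivalent: (i) the operators satisfy the Cuntz relations S_j* S_k = δ_{j,k} I for all j, k ∈ {0,…,N−1} and ∑_{j=0}^{N−1} S_j S_j* = I; (ii) for every z ∈ 𝕋 and all j, k ∈ {0,…,N−1}, ∑_{w ∈ 𝕋, w^N = z} conj(m_j(w)) · m_k(w) = N δ_{j,k}. -/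
open MeasureTheory

noncomputable instance : MeasurableSpace Circle := borel Circle
instance : BorelSpace Circle := ⟨rfl⟩

/-!
Pulling back along a quotient homomorphism `φ : G → H` of compact groups with finite kernel is an
isometry `L²(H) → L²(G)`, and its adjoint averages over the fibers of `φ`. Hence `S_j* S_k` is
multiplication by the normalized fiber sum of `conj m_j * m_k`. As this multiplier is continuous
and Haar measure charges every nonempty open set, `S_j* S_k = δ_{jk} I` is the filter condition.

The number of filters is the order of the kernel, so at each point the filter condition says that
a square matrix is a multiple of an isometry, hence of a unitary. The dual relation, coming from
its rows, says that every continuous function `F` equals `∑ S_j S_j* F`, and such `F` are dense.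
-/

open Topology ContinuousLinearMap
open scoped ComplexConjugate Matrix

section FiberSum

/-- The transfer of `F : G → E` along `φ : G → H`: at `z` it sums `F` over the fiber of `φ`.
As a `finsum` it is `0` where `F` has infinite support in the fiber. -/
noncomputable def fiberSum {G H E : Type*} [AddCommMonoid E] (φ : G → H) (F : G → E) (z : H) : E :=
  ∑ᶠ w ∈ {w | φ w = z}, F w

variable {G H : Type*} [Group G] [Group H] {φ : G →* H}

lemma fiberSum_map {E : Type*} [AddCommMonoid E] [Fintype φ.ker] (F : G → E) (w : G) :
    fiberSum φ F (φ w) = ∑ u : φ.ker, F (u * w) := by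
  have hbij : Set.BijOn (fun u : φ.ker => (u : G) * w) Set.univ {v | φ v = φ w} := by
    refine ⟨fun u _ => ?_, fun u _ v _ huv => Subtype.ext (mul_right_cancel huv), fun v hv => ?_⟩
    · simp [φ.mem_ker.1 u.2]
    · exact ⟨⟨v * w⁻¹, by simpa [φ.mem_ker, mul_inv_eq_one] using hv⟩, trivial, by simp⟩
  rw [← finsum_eq_sum_of_fintype, ← finsum_mem_univ]
  exact (finsum_mem_eq_of_bijOn _ hbij fun _ _ => rfl).symm

lemma fiberSum_mul_comp {R : Type*} [NonUnitalNonAssocSemiring R] [Finite φ.ker]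
    (hφ : Function.Surjective φ) (F : G → R) (g : H → R) (z : H) :
    fiberSum φ (fun w => F w * g (φ w)) z = fiberSum φ F z * g z := by
  have := Fintype.ofFinite φ.ker
  obtain ⟨w, rfl⟩ := hφ z
  simp only [fiberSum_map, map_mul, φ.mem_ker.1 (Subtype.prop _), one_mul, Finset.sum_mul]

lemma continuous_fiberSum {E : Type*} [AddCommMonoid E] [TopologicalSpace E] [ContinuousAdd E]
    [TopologicalSpace G] [ContinuousMul G] [TopologicalSpace H] [Finite φ.ker]
    (hφ : IsQuotientMap φ) {F : G → E} (hF : Continuous F) : Continuous (fiberSum φ F) := by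
  have := Fintype.ofFinite φ.ker
  have hcomp : fiberSum φ F ∘ φ = fun w => ∑ u : φ.ker, F (u * w) := funext (fiberSum_map F)
  rw [hφ.continuous_iff, hcomp]
  fun_prop

variable [MeasurableSpace G] [MeasurableSpace H] {μ : Measure G} {ν : Measure H}

lemma integral_fiberSum {E : Type*} [NormedAddCommGroup E] [NormedSpace ℝ E] [MeasurableMul G]
    [μ.IsMulLeftInvariant] [Finite φ.ker] (hφ : MeasurePreserving φ μ ν) {F : G → E}
    (hF : Integrable F μ) (hsum : AEStronglyMeasurable (fiberSum φ F) ν) :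
    ∫ z, fiberSum φ F z ∂ν = Nat.card φ.ker • ∫ w, F w ∂μ := by
  have := Fintype.ofFinite φ.ker
  calc ∫ z, fiberSum φ F z ∂ν
      = ∫ w, fiberSum φ F (φ w) ∂μ := by
        rw [← hφ.map_eq] at hsum ⊢
        exact integral_map hφ.aemeasurable hsum
    _ = ∑ u : φ.ker, ∫ w, F (u * w) ∂μ := by
        simp only [fiberSum_map]
        exact integral_finsetSum _ fun u _ => hF.comp_mul_left u
    _ = Nat.card φ.ker • ∫ w, F w ∂μ := by
        simp only [integral_mul_left_eq_self, Finset.sum_const, Finset.card_univ,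
          Nat.card_eq_fintype_card]

end FiberSum

lemma memLp_mul_of_continuous {X 𝕜 : Type*} [TopologicalSpace X] [CompactSpace X]
    [MeasurableSpace X] [OpensMeasurableSpace X] [RCLike 𝕜] {μ : Measure X} {p : ENNReal}
    {F g : X → 𝕜} (hF : Continuous F) (hg : MemLp g p μ) : MemLp (fun x => F x * g x) p μ := by
  obtain ⟨C, hC⟩ := (isCompact_range hF).isBounded.exists_norm_le
  have hF_top : MemLp F ⊤ μ :=
    memLp_top_of_bound hF.aestronglyMeasurable C (ae_of_all μ fun x => hC _ ⟨x, rfl⟩)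
  exact hg.mul' hF_top

lemma mul_conjTranspose_eq_smul_one_of_card_eq {m n K : Type*} [Fintype m] [DecidableEq m]
    [Fintype n] [DecidableEq n] [Field K] [Star K] (hcard : Fintype.card m = Fintype.card n)
    {B : Matrix m n K} {c : K} (hc : c ≠ 0) (hB : Bᴴ * B = c • 1) : B * Bᴴ = c • 1 := by
  have hinv : (c⁻¹ • Bᴴ) * B = 1 := by rw [Matrix.smul_mul, hB, inv_smul_smul₀ hc]
  rw [Matrix.mul_eq_one_comm_of_card_eq _ _ _ hcard.symm, Matrix.mul_smul] at hinv
  rw [← hinv, smul_inv_smul₀ hc]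

section Reconstruction

variable {G H ι 𝕜 : Type*} [Group G] [Group H] [DecidableEq ι] [RCLike 𝕜]

/-- The quadrature mirror filter condition for a family `m` of filters on `G`, with the fibers of
`φ : G → H` in the role of the sets of `N`-th roots, and `Nat.card φ.ker` in the role of `N`. -/
def IsQuadratureMirrorFilter (φ : G →* H) (m : ι → G → 𝕜) : Prop :=
  ∀ (z : H) (j k : ι), fiberSum φ (fun w => conj (m j w) * m k w) z
    = (Nat.card φ.ker : 𝕜) * if j = k then 1 else 0

variable {φ : G →* H} [Finite φ.ker] [Fintype ι] {m : ι → G → 𝕜}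

/- The filter condition at `φ w` says that the square matrix `m k (u * w)`, indexed by
`u : φ.ker` and `k : ι`, has orthogonal columns; its rows are then orthogonal as well. -/
lemma IsQuadratureMirrorFilter.sum_mul_fiberSum_conj_mul (hm : IsQuadratureMirrorFilter φ m)
    (hcard : Nat.card φ.ker = Fintype.card ι) (F : G → 𝕜) (w : G) :
    ∑ j, m j w * fiberSum φ (fun v => conj (m j v) * F v) (φ w) = Nat.card φ.ker * F w := by
  classical
  have := Fintype.ofFinite φ.ker
  let B : Matrix φ.ker ι 𝕜 := .of fun u k => m k (u * w)
  have columns : Bᴴ * B = (Nat.card φ.ker : 𝕜) • 1 := by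
    ext j k
    simpa [B, Matrix.mul_apply, Matrix.one_apply, fiberSum_map] using hm (φ w) j k
  have rows := mul_conjTranspose_eq_smul_one_of_card_eq
    (Nat.card_eq_fintype_card.symm.trans hcard) (Nat.cast_ne_zero.2 Nat.card_pos.ne') columns
  have row_one (u : φ.ker) :
      ∑ j, m j w * conj (m j (u * w)) = if 1 = u then (Nat.card φ.ker : 𝕜) else 0 := by
    simpa [B, Matrix.mul_apply, Matrix.one_apply] using congr_fun₂ rows 1 u
  calc ∑ j, m j w * fiberSum φ (fun v => conj (m j v) * F v) (φ w)
      = ∑ u : φ.ker, (∑ j, m j w * conj (m j (u * w))) * F (u * w) := by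
        simp only [fiberSum_map, Finset.mul_sum, Finset.sum_mul, mul_assoc]
        exact Finset.sum_comm
    _ = Nat.card φ.ker * F w := by simp [row_one]

end Reconstruction

section WeightedComposition

variable {G H 𝕜 : Type*} [Group G] [TopologicalSpace G] [IsTopologicalGroup G] [CompactSpace G]
  [MeasurableSpace G] [BorelSpace G] [Group H] [TopologicalSpace H] [MeasurableSpace H]
  [BorelSpace H] [RCLike 𝕜] {μ : Measure G} {ν : Measure H}

/-- `S : L²(H) → L²(G)` is the weighted composition operator `(S f)(w) = m w * f (φ w)`. -/
def IsWeightedComposition (φ : G → H) (m : G → 𝕜) (S : Lp 𝕜 2 ν →L[𝕜] Lp 𝕜 2 μ) : Prop :=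
  ∀ f : Lp 𝕜 2 ν, S f =ᵐ[μ] fun w => m w * f (φ w)

variable {φ : G →* H} [Finite φ.ker] [μ.IsMulLeftInvariant]

lemma integral_mul_comp (hφ : IsQuotientMap φ) (hμν : MeasurePreserving φ μ ν) {F : G → 𝕜}
    (hF : Continuous F) {g : H → 𝕜} (hg : Integrable g ν) :
    ∫ w, F w * g (φ w) ∂μ = (Nat.card φ.ker : 𝕜)⁻¹ * ∫ z, fiberSum φ F z * g z ∂ν := by
  have hFg : Integrable (fun w => F w * g (φ w)) μ :=
    memLp_one_iff_integrable.1 <| memLp_mul_of_continuous hF <|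
      memLp_one_iff_integrable.2 <| hμν.integrable_comp_of_integrable hg
  have hsum := funext (fiberSum_mul_comp hφ.surjective F g)
  have hmeas : AEStronglyMeasurable (fun z => fiberSum φ F z * g z) ν :=
    (continuous_fiberSum hφ hF).aestronglyMeasurable.mul hg.1
  have htransfer := integral_fiberSum hμν hFg (hsum ▸ hmeas)
  rw [hsum, nsmul_eq_mul] at htransfer
  rw [htransfer, inv_mul_cancel_left₀ (Nat.cast_ne_zero.2 Nat.card_pos.ne')]

variable [CompactSpace H] {m n : G → 𝕜} {S T : Lp 𝕜 2 ν →L[𝕜] Lp 𝕜 2 μ}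

lemma IsWeightedComposition.adjoint_ae_eq (hφ : IsQuotientMap φ) (hμν : MeasurePreserving φ μ ν)
    (hS : IsWeightedComposition φ m S) (hm : Continuous m) {F : G → 𝕜} (hF : Continuous F)
    {x : Lp 𝕜 2 μ} {g : Lp 𝕜 2 ν} (hx : x =ᵐ[μ] fun w => F w * g (φ w)) :
    adjoint S x =ᵐ[ν] fun z =>
      (Nat.card φ.ker : 𝕜)⁻¹ * fiberSum φ (fun w => conj (m w) * F w) z * g z := by
  have hmF : Continuous fun w => conj (m w) * F w := (RCLike.continuous_conj.comp hm).mul hF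
  have hP : Continuous fun z =>
      (Nat.card φ.ker : 𝕜)⁻¹ * fiberSum φ (fun w => conj (m w) * F w) z :=
    continuous_const.mul (continuous_fiberSum hφ hmF)
  have hy := memLp_mul_of_continuous hP (Lp.memLp g)
  suffices adjoint S x = hy.toLp from this ▸ hy.coeFn_toLp
  refine ext_inner_left 𝕜 fun f => ?_
  calc inner 𝕜 f (adjoint S x)
      = ∫ w, inner 𝕜 (S f w) (x w) ∂μ := by rw [adjoint_inner_right, L2.inner_def]
    _ = ∫ w, conj (m w) * F w * inner 𝕜 (f (φ w)) (g (φ w)) ∂μ := by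
        refine integral_congr_ae ?_
        filter_upwards [hS f, hx] with w hSw hxw
        simp only [hSw, hxw, RCLike.inner_apply, map_mul]
        ring
    _ = (Nat.card φ.ker : 𝕜)⁻¹ *
          ∫ z, fiberSum φ (fun w => conj (m w) * F w) z * inner 𝕜 (f z) (g z) ∂ν :=
        integral_mul_comp hφ hμν hmF (L2.integrable_inner f g)
    _ = inner 𝕜 f hy.toLp := by
        rw [L2.inner_def, ← integral_const_mul]
        refine integral_congr_ae ?_
        filter_upwards [hy.coeFn_toLp] with z hz
        simp only [hz, RCLike.inner_apply]
        ring

lemma IsWeightedComposition.adjoint_comp_eq_smul_one_iff [IsFiniteMeasure ν] [ν.IsOpenPosMeasure]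
    (hφ : IsQuotientMap φ) (hμν : MeasurePreserving φ μ ν) (hS : IsWeightedComposition φ m S)
    (hT : IsWeightedComposition φ n T) (hm : Continuous m) (hn : Continuous n) (c : 𝕜) :
    adjoint S ∘L T = c • 1 ↔
      ∀ z, fiberSum φ (fun w => conj (m w) * n w) z = Nat.card φ.ker * c := by
  have hcard : (Nat.card φ.ker : 𝕜) ≠ 0 := Nat.cast_ne_zero.2 Nat.card_pos.ne'
  have hcomp (g : Lp 𝕜 2 ν) := hS.adjoint_ae_eq hφ hμν hm hn (hT g)
  refine ⟨fun h => congr_fun ?_, fun h => ContinuousLinearMap.ext fun g => Lp.ext ?_⟩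
  · have hcont : Continuous (fiberSum φ fun w => conj (m w) * n w) :=
      continuous_fiberSum hφ ((RCLike.continuous_conj.comp hm).mul hn)
    refine (hcont.ae_eq_iff_eq ν continuous_const).1 ?_
    filter_upwards [hcomp (Lp.const 2 ν 1), Lp.coeFn_const (p := 2) ν (1 : 𝕜),
      Lp.coeFn_smul c (Lp.const 2 ν (1 : 𝕜))] with z hz hone hsmul
    rw [← comp_apply, h, smul_apply, one_apply_eq_self, hsmul, Pi.smul_apply, hone] at hz
    rwa [Function.const_apply, smul_eq_mul, mul_one, mul_one, eq_inv_mul_iff_mul_eq₀ hcard,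
      eq_comm] at hz
  · filter_upwards [hcomp g, Lp.coeFn_smul c g] with z hz hsmul
    rw [comp_apply, hz, h, inv_mul_cancel_left₀ hcard]
    exact hsmul.symm

lemma IsWeightedComposition.adjoint_toLp_ae_eq [IsFiniteMeasure μ] [IsFiniteMeasure ν]
    (hφ : IsQuotientMap φ) (hμν : MeasurePreserving φ μ ν) (hS : IsWeightedComposition φ m S)
    (hm : Continuous m) (F : C(G, 𝕜)) :
    adjoint S (F.toLp 2 μ 𝕜) =ᵐ[ν] fun z =>
      (Nat.card φ.ker : 𝕜)⁻¹ * fiberSum φ (fun w => conj (m w) * F w) z := by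
  have hone : Lp.const 2 ν (1 : 𝕜) =ᵐ[ν] Function.const H 1 := Lp.coeFn_const ..
  have hF : F.toLp 2 μ 𝕜 =ᵐ[μ] fun w => F w * Lp.const 2 ν (1 : 𝕜) (φ w) := by
    filter_upwards [F.coeFn_toLp (p := 2) (𝕜 := 𝕜) μ, hμν.quasiMeasurePreserving.ae hone]
      with w hFw hw
    rw [hFw, hw, Function.const_apply, mul_one]
  filter_upwards [hS.adjoint_ae_eq hφ hμν hm F.continuous hF, hone] with z hz hz_one
  rw [hz, hz_one, Function.const_apply, mul_one]

variable {ι : Type*} [Fintype ι] [DecidableEq ι] {m : ι → G → 𝕜}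
  {S : ι → Lp 𝕜 2 ν →L[𝕜] Lp 𝕜 2 μ}

lemma IsQuadratureMirrorFilter.sum_comp_adjoint_eq_one [IsFiniteMeasure μ] [μ.WeaklyRegular]
    [IsFiniteMeasure ν] (hφ : IsQuotientMap φ) (hμν : MeasurePreserving φ μ ν)
    (hQMF : IsQuadratureMirrorFilter φ m) (hcard : Nat.card φ.ker = Fintype.card ι)
    (hm : ∀ j, Continuous (m j)) (hS : ∀ j, IsWeightedComposition φ (m j) (S j)) :
    ∑ j, S j ∘L adjoint (S j) = 1 := by
  have hdense := ContinuousMap.toLp_denseRange (E := 𝕜) (p := 2) μ 𝕜 (by simp)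
  refine coeFn_injective <| hdense.equalizer (ContinuousLinearMap.continuous _)
    (ContinuousLinearMap.continuous _) <| funext fun F => Lp.ext ?_
  have hterm (j : ι) : S j (adjoint (S j) (F.toLp 2 μ 𝕜)) =ᵐ[μ] fun w =>
      m j w * ((Nat.card φ.ker : 𝕜)⁻¹ * fiberSum φ (fun v => conj (m j v) * F v) (φ w)) := by
    filter_upwards [hS j (adjoint (S j) (F.toLp 2 μ 𝕜)), hμν.quasiMeasurePreserving.ae
      ((hS j).adjoint_toLp_ae_eq hφ hμν (hm j) F)] with w hSw hw
    rw [hSw, hw]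
  have hsum := Lp.coeFn_fun_finsetSum Finset.univ fun j => S j (adjoint (S j) (F.toLp 2 μ 𝕜))
  filter_upwards [hsum, ae_all_iff.2 hterm, F.coeFn_toLp (p := 2) (𝕜 := 𝕜) μ] with w hw hterm hF
  simp only [Function.comp_apply, sum_apply, comp_apply, one_apply_eq_self]
  rw [hw, hF]
  simp only [hterm, mul_left_comm (m _ w), ← Finset.mul_sum, hQMF.sum_mul_fiberSum_conj_mul hcard]
  exact inv_mul_cancel_left₀ (Nat.cast_ne_zero.2 Nat.card_pos.ne') _

end WeightedComposition

theorem stmt3_general {G H ι 𝕜 : Type*} [Group G] [TopologicalSpace G] [IsTopologicalGroup G]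
    [CompactSpace G] [MeasurableSpace G] [BorelSpace G] [Group H] [TopologicalSpace H]
    [IsTopologicalGroup H] [CompactSpace H] [MeasurableSpace H] [BorelSpace H] [Fintype ι]
    [DecidableEq ι] [RCLike 𝕜] {μ : Measure G} [μ.IsHaarMeasure] [IsProbabilityMeasure μ]
    [μ.WeaklyRegular] {ν : Measure H} [ν.IsHaarMeasure] [IsProbabilityMeasure ν]
    {φ : G →* H} [Finite φ.ker] (hφ : IsQuotientMap φ) (hcard : Nat.card φ.ker = Fintype.card ι)
    {m : ι → G → 𝕜} (hm : ∀ j, Continuous (m j)) {S : ι → Lp 𝕜 2 ν →L[𝕜] Lp 𝕜 2 μ}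
    (hS : ∀ j, IsWeightedComposition φ (m j) (S j)) :
    ((∀ j k, adjoint (S j) ∘L S k = if j = k then 1 else 0) ∧ ∑ j, S j ∘L adjoint (S j) = 1) ↔
      IsQuadratureMirrorFilter φ m := by
  have hμν : MeasurePreserving φ μ ν := φ.measurePreserving hφ.continuous hφ.surjective (by simp)
  have hisometry : (∀ j k, adjoint (S j) ∘L S k = if j = k then 1 else 0) ↔
      IsQuadratureMirrorFilter φ m := by
    have hjk (j k : ι) := (hS j).adjoint_comp_eq_smul_one_iff hφ hμν (hS k) (hm j) (hm k)
      (if j = k then 1 else 0)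
    simp only [ite_smul, one_smul, zero_smul] at hjk
    simp only [hjk, IsQuadratureMirrorFilter]
    exact ⟨fun h z j k => h j k z, fun h j k z => h z j k⟩
  rw [hisometry, and_iff_left_iff_imp]
  exact fun hQMF => hQMF.sum_comp_adjoint_eq_one hφ hμν hcard hm hS

lemma isQuotientMap_circle_powMonoidHom (N : ℕ) [NeZero N] :
    IsQuotientMap (powMonoidHom N : Circle →* Circle) :=
  (Circle.isQuotientCoveringMap_npow N).toIsQuotientMap

lemma natCard_ker_circle_powMonoidHom (N : ℕ) [NeZero N] :
    Nat.card (powMonoidHom N : Circle →* Circle).ker = N := by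
  have e : (powMonoidHom N : Circle →* Circle).ker ≃ rootsOfUnity N Circle :=
    toUnits.toEquiv.subtypeEquiv fun u => by simp [MonoidHom.mem_ker, ← map_pow]
  exact (Nat.card_congr e).trans (HasEnoughRootsOfUnity.natCard_rootsOfUnity Circle N)

instance finite_ker_circle_powMonoidHom (N : ℕ) [NeZero N] :
    Finite (powMonoidHom N : Circle →* Circle).ker :=
  Nat.finite_of_card_ne_zero ((natCard_ker_circle_powMonoidHom N).trans_ne (NeZero.ne N))

/- STATEMENT 3: For continuous filter functions `m₀, …, m_{N−1}` on the circle, the operators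
`(S_j f)(z) = m_j(z) f(z^N)` on `L²(𝕋, μ)` (μ normalized Haar measure) satisfy the Cuntz
relations iff the quadrature mirror filter condition
`∑_{w^N = z} conj(m_j(w)) m_k(w) = N δ_{j,k}` holds for all `z ∈ 𝕋`. -/
theorem stmt3 (N : ℕ) (hN : 2 ≤ N) (μ : Measure Circle) [μ.IsHaarMeasure]
    [IsProbabilityMeasure μ]
    (m : Fin N → Circle → ℂ) (hm : ∀ j, Continuous (m j))
    (S : Fin N → (Lp ℂ 2 μ →L[ℂ] Lp ℂ 2 μ))
    (hS : ∀ (j : Fin N) (f : Lp ℂ 2 μ),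
      (S j f : Circle → ℂ) =ᵐ[μ] fun z => m j z * (f : Circle → ℂ) (z ^ N)) :
    ((∀ j k : Fin N, ContinuousLinearMap.adjoint (S j) ∘L S k
        = if j = k then (1 : Lp ℂ 2 μ →L[ℂ] Lp ℂ 2 μ) else 0) ∧
      ∑ j : Fin N, S j ∘L ContinuousLinearMap.adjoint (S j)
        = (1 : Lp ℂ 2 μ →L[ℂ] Lp ℂ 2 μ)) ↔
    (∀ (z : Circle) (j k : Fin N),
      ∑ᶠ w ∈ {w : Circle | w ^ N = z}, (starRingEnd ℂ) (m j w) * m k w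
        = (N : ℂ) * (if j = k then 1 else 0)) := by
  have : NeZero N := ⟨by omega⟩
  simpa only [IsQuadratureMirrorFilter, fiberSum, powMonoidHom_apply,
    natCard_ker_circle_powMonoidHom] using stmt3_general (isQuotientMap_circle_powMonoidHom N)
      ((natCard_ker_circle_powMonoidHom N).trans (Fintype.card_fin N).symm) hm hS
end

section
/- Let N ≥ 2 and let m : 𝕋 → ℂ be continuous. Let S be the bounded operator on L²(𝕋, μ) (μ the normalized Haar measure on the circle) defined by (S f)(z) = m(z) f(z^N). Then the Hilbert-space adjoint S* of S is given, for every f ∈ L²(𝕋, μ), by (S* f)(z) = (1/N) ∑_{w ∈ 𝕋, w^N = z} conj(m(w)) f(w) for μ-almost every z ∈ 𝕋. -/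
open MeasureTheory

/-!
Averaging over the fibres of a measure-preserving homomorphism `φ : G → H` with finite kernel is
adjoint to composition with `φ`: the fibre through `z` is the coset `ker φ * z`, so invariance of
`μ` under translation by the kernel gives `∫_E (average of g) dν = ∫_{φ⁻¹ E} g dμ`.
Testing the adjoint of `S` against indicator functions identifies it with the average of
`conj m * f`, which is integrable because `m = S 1` lies in `L²`.
-/

section FiberAverage

variable {G H 𝕜 : Type*} [Group G] [Group H] [RCLike 𝕜]

/-- The average of `g` over the fibre of `φ` above a point of `H`, i.e. the transfer operator of
`φ`. It is meant for surjective `φ` with finite kernel: every fibre then has `Nat.card φ.ker`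
elements. -/
noncomputable def fiberAverage (φ : G →* H) (g : G → 𝕜) (z : H) : 𝕜 :=
  (Nat.card φ.ker : 𝕜)⁻¹ * ∑ᶠ w ∈ {w : G | φ w = z}, g w

theorem fiberAverage_map (φ : G →* H) (g : G → 𝕜) (z : G) :
    fiberAverage φ g (φ z) = (Nat.card φ.ker : 𝕜)⁻¹ * ∑ᶠ k : φ.ker, g (k * z) := by
  have fiber_eq_range : {w : G | φ w = φ z} = Set.range fun k : φ.ker => (k : G) * z := by
    ext w
    refine ⟨fun hw => ⟨⟨w * z⁻¹, ?_⟩, inv_mul_cancel_right w z⟩, ?_⟩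
    · rw [MonoidHom.mem_ker, map_mul, map_inv, Set.mem_ofPred_eq.mp hw, mul_inv_cancel]
    · rintro ⟨k, rfl⟩
      rw [Set.mem_ofPred_eq, map_mul, φ.mem_ker.mp k.2, one_mul]
  have translate_injective : Function.Injective fun k : φ.ker => (k : G) * z :=
    (mul_left_injective z).comp Subtype.val_injective
  rw [fiberAverage, fiber_eq_range, finsum_mem_range translate_injective]

theorem fiberAverage_indicator_preimage (φ : G →* H) (g : G → 𝕜) (E : Set H) :
    fiberAverage φ ((φ ⁻¹' E).indicator g) = E.indicator (fiberAverage φ g) := by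
  ext z
  by_cases hz : z ∈ E
  · rw [Set.indicator_of_mem hz, fiberAverage, fiberAverage]
    congr 1
    refine finsum_mem_congr rfl fun w (hw : φ w = z) => Set.indicator_of_mem ?_ g
    rwa [Set.mem_preimage, hw]
  · rw [Set.indicator_of_notMem hz, fiberAverage, finsum_mem_of_eqOn_zero, mul_zero]
    intro w (hw : φ w = z)
    refine Set.indicator_of_notMem ?_ g
    rwa [Set.mem_preimage, hw]

theorem preimage_image_eq_iUnion_ker (φ : G →* H) (s : Set G) :
    φ ⁻¹' (φ '' s) = ⋃ k : φ.ker, (fun w => (k : G) * w) ⁻¹' s := by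
  ext w
  simp only [Set.mem_preimage, Set.mem_image, Set.mem_iUnion]
  constructor
  · rintro ⟨v, hv, hvw⟩
    refine ⟨⟨v * w⁻¹, ?_⟩, by rwa [inv_mul_cancel_right]⟩
    rw [MonoidHom.mem_ker, map_mul, map_inv, hvw, mul_inv_cancel]
  · rintro ⟨k, hk⟩
    exact ⟨k * w, hk, by rw [map_mul, φ.mem_ker.mp k.2, one_mul]⟩

variable [MeasurableSpace G] [MeasurableMul G] {φ : G →* H} {g : G → 𝕜}

section Composition

variable [Finite φ.ker] {μ : Measure G} [μ.IsMulLeftInvariant]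

theorem integrable_fiberAverage_comp (hg : Integrable g μ) :
    Integrable (fun z => fiberAverage φ g (φ z)) μ := by
  have := Fintype.ofFinite φ.ker
  simp only [fiberAverage_map, finsum_eq_sum_of_fintype]
  exact (integrable_finsetSum _ fun (k : φ.ker) _ => hg.comp_mul_left (k : G)).const_mul _

theorem integral_fiberAverage_comp (hg : Integrable g μ) :
    ∫ z, fiberAverage φ g (φ z) ∂μ = ∫ w, g w ∂μ := by
  have := Fintype.ofFinite φ.ker
  have card_ne_zero : (Nat.card φ.ker : 𝕜) ≠ 0 := Nat.cast_ne_zero.mpr Nat.card_pos.ne'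
  calc ∫ z, fiberAverage φ g (φ z) ∂μ
      = (Nat.card φ.ker : 𝕜)⁻¹ * ∑ k : φ.ker, ∫ z, g (k * z) ∂μ := by
        simp only [fiberAverage_map, finsum_eq_sum_of_fintype]
        rw [integral_const_mul,
          integral_finsetSum _ fun (k : φ.ker) _ => hg.comp_mul_left (k : G)]
    _ = (Nat.card φ.ker : 𝕜)⁻¹ * ∑ _k : φ.ker, ∫ w, g w ∂μ := by
        simp only [integral_mul_left_eq_self g]
    _ = ∫ w, g w ∂μ := by
        rw [Finset.sum_const, Finset.card_univ, ← Nat.card_eq_fintype_card, nsmul_eq_mul,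
          inv_mul_cancel_left₀ card_ne_zero]

end Composition

variable [StandardBorelSpace G] [MeasurableSpace H] [MeasurableSpace.CountablySeparated H]

theorem measurable_fiberAverage [Finite φ.ker] (hφ : Measurable φ)
    (hsurj : Function.Surjective φ) (hg : Measurable g) : Measurable (fiberAverage φ g) := by
  rw [← hφ.measurable_comp_iff_of_surjective hsurj]
  have := Fintype.ofFinite φ.ker
  simp only [Function.comp_def, fiberAverage_map, finsum_eq_sum_of_fintype]
  fun_prop

variable {μ : Measure G} [μ.IsMulLeftInvariant] {ν : Measure H}

theorem measure_image_eq_zero_of_countable_ker [Countable φ.ker] (hφ : MeasurePreserving φ μ ν)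
    (hsurj : Function.Surjective φ) {s : Set G} (hs : μ s = 0) : ν (φ '' s) = 0 := by
  set t := toMeasurable μ s
  have ht : MeasurableSet t := measurableSet_toMeasurable μ s
  have saturation_measurable : MeasurableSet (φ ⁻¹' (φ '' t)) := by
    rw [preimage_image_eq_iUnion_ker]
    exact .iUnion fun k => measurable_const_mul (k : G) ht
  have saturation_null : μ (φ ⁻¹' (φ '' t)) = 0 := by
    rw [preimage_image_eq_iUnion_ker, measure_iUnion_null_iff]
    intro k
    rw [measure_preimage_mul, measure_toMeasurable, hs]
  have image_measurable : MeasurableSet (φ '' t) :=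
    (hφ.measurable.measurableSet_preimage_iff_of_surjective hsurj).mp saturation_measurable
  refine measure_mono_null (Set.image_mono (subset_toMeasurable μ s)) ?_
  rw [← hφ.measure_preimage image_measurable.nullMeasurableSet, saturation_null]

theorem fiberAverage_congr_ae [Countable φ.ker] (hφ : MeasurePreserving φ μ ν)
    (hsurj : Function.Surjective φ) {g' : G → 𝕜} (h : g =ᵐ[μ] g') :
    fiberAverage φ g =ᵐ[ν] fiberAverage φ g' := by
  refine measure_mono_null ?_ (measure_image_eq_zero_of_countable_ker hφ hsurj h)
  intro z hz
  by_contra hnot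
  refine hz (congrArg _ (finsum_mem_congr rfl fun w hw => ?_))
  by_contra hne
  exact hnot ⟨w, hne, hw⟩

variable [Finite φ.ker]

theorem aestronglyMeasurable_fiberAverage (hφ : MeasurePreserving φ μ ν)
    (hsurj : Function.Surjective φ) (hg : AEStronglyMeasurable g μ) :
    AEStronglyMeasurable (fiberAverage φ g) ν :=
  ⟨fiberAverage φ (hg.mk g),
    (measurable_fiberAverage hφ.measurable hsurj
      hg.stronglyMeasurable_mk.measurable).stronglyMeasurable,
    fiberAverage_congr_ae hφ hsurj hg.ae_eq_mk⟩

theorem integrable_fiberAverage (hφ : MeasurePreserving φ μ ν)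
    (hsurj : Function.Surjective φ) (hg : Integrable g μ) : Integrable (fiberAverage φ g) ν :=
  (hφ.integrable_comp (aestronglyMeasurable_fiberAverage hφ hsurj hg.aestronglyMeasurable)).mp
    (integrable_fiberAverage_comp hg)

theorem integral_fiberAverage (hφ : MeasurePreserving φ μ ν)
    (hsurj : Function.Surjective φ) (hg : Integrable g μ) :
    ∫ z, fiberAverage φ g z ∂ν = ∫ w, g w ∂μ := by
  have hmeas := aestronglyMeasurable_fiberAverage hφ hsurj hg.aestronglyMeasurable
  rw [← hφ.map_eq] at hmeas ⊢
  rw [integral_map hφ.aemeasurable hmeas, integral_fiberAverage_comp hg]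

theorem setIntegral_fiberAverage (hφ : MeasurePreserving φ μ ν)
    (hsurj : Function.Surjective φ) (hg : Integrable g μ) {E : Set H} (hE : MeasurableSet E) :
    ∫ z in E, fiberAverage φ g z ∂ν = ∫ w in φ ⁻¹' E, g w ∂μ := by
  have hE' : MeasurableSet (φ ⁻¹' E) := hφ.measurable hE
  rw [← integral_indicator hE, ← integral_indicator hE', ← fiberAverage_indicator_preimage,
    integral_fiberAverage hφ hsurj (hg.indicator hE')]

end FiberAverage

section WeightedComposition

variable {X Y 𝕜 : Type*} [MeasurableSpace X] [MeasurableSpace Y] [RCLike 𝕜]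
  {μ : Measure X} {ν : Measure Y} {T : X → Y} {m : X → 𝕜} {S : Lp 𝕜 2 ν →L[𝕜] Lp 𝕜 2 μ}

theorem weight_memLp_of_weightedComposition [IsFiniteMeasure ν]
    (hT : Measure.QuasiMeasurePreserving T μ ν)
    (hS : ∀ f : Lp 𝕜 2 ν, S f =ᵐ[μ] fun x => m x * f (T x)) : MemLp m 2 μ := by
  let one : Lp 𝕜 2 ν := indicatorConstLp 2 MeasurableSet.univ (measure_ne_top ν _) (1 : 𝕜)
  have one_comp : ∀ᵐ x ∂μ, one (T x) = 1 := by
    filter_upwards [hT.ae (indicatorConstLp_coeFn : one =ᵐ[ν] _)] with x hx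
    rw [hx, Set.indicator_of_mem (Set.mem_univ _)]
  refine (Lp.memLp (S one)).ae_eq ?_
  filter_upwards [hS one, one_comp] with x hx hone
  rw [hx, hone, mul_one]

theorem setIntegral_adjoint_weightedComposition (hT : Measure.QuasiMeasurePreserving T μ ν)
    (hS : ∀ f : Lp 𝕜 2 ν, S f =ᵐ[μ] fun x => m x * f (T x)) (f : Lp 𝕜 2 μ)
    {E : Set Y} (hE : MeasurableSet E) (hνE : ν E ≠ ⊤) :
    ∫ y in E, ContinuousLinearMap.adjoint S f y ∂ν
      = ∫ x in T ⁻¹' E, starRingEnd 𝕜 (m x) * f x ∂μ := by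
  rw [← L2.inner_indicatorConstLp_one hE hνE, ContinuousLinearMap.adjoint_inner_right,
    L2.inner_def, ← integral_indicator (hT.measurable hE)]
  refine integral_congr_ae ?_
  filter_upwards [hS (indicatorConstLp 2 hE hνE 1),
    hT.ae (indicatorConstLp_coeFn (p := 2) (hs := hE) (hμs := hνE) (c := (1 : 𝕜)))] with x hSx hx
  rw [hSx, hx]
  by_cases hxE : T x ∈ E
  · simp [hxE, mul_comm]
  · simp [hxE]

end WeightedComposition

theorem stmt4_general {G H 𝕜 : Type*} [Group G] [MeasurableSpace G] [MeasurableMul G]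
    [StandardBorelSpace G] [Group H] [MeasurableSpace H] [MeasurableSpace.CountablySeparated H]
    [RCLike 𝕜] {μ : Measure G} [μ.IsMulLeftInvariant] {ν : Measure H} [IsFiniteMeasure ν]
    {φ : G →* H} [Finite φ.ker] (hφ : MeasurePreserving φ μ ν) (hsurj : Function.Surjective φ)
    {m : G → 𝕜} {S : Lp 𝕜 2 ν →L[𝕜] Lp 𝕜 2 μ}
    (hS : ∀ f : Lp 𝕜 2 ν, S f =ᵐ[μ] fun z => m z * f (φ z)) (f : Lp 𝕜 2 μ) :
    ContinuousLinearMap.adjoint S f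
      =ᵐ[ν] fiberAverage φ fun w => starRingEnd 𝕜 (m w) * f w := by
  have hT := hφ.quasiMeasurePreserving
  have hg : Integrable (fun w => starRingEnd 𝕜 (m w) * f w) μ :=
    (weight_memLp_of_weightedComposition hT hS).star.integrable_mul (Lp.memLp f)
  refine Integrable.ae_eq_of_forall_setIntegral_eq _ _
    ((Lp.memLp _).integrable one_le_two) (integrable_fiberAverage hφ hsurj hg) fun E hE hνE => ?_
  rw [setIntegral_adjoint_weightedComposition hT hS f hE hνE.ne,
    setIntegral_fiberAverage hφ hsurj hg hE]

section PowerMap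

variable (N : ℕ) [NeZero N]

theorem natCard_ker_powMonoidHom (M : Type*) [CommGroup M] [HasEnoughRootsOfUnity M N] :
    Nat.card (powMonoidHom N : M →* M).ker = N := by
  have ker_equiv_rootsOfUnity : (powMonoidHom N : M →* M).ker ≃ rootsOfUnity N M :=
    toUnits.toEquiv.subtypeEquiv fun z => by
      simp [MonoidHom.mem_ker, mem_rootsOfUnity, ← map_pow]
  rw [Nat.card_congr ker_equiv_rootsOfUnity, HasEnoughRootsOfUnity.natCard_rootsOfUnity]

theorem finite_ker_powMonoidHom (M : Type*) [CommGroup M] [HasEnoughRootsOfUnity M N] :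
    Finite (powMonoidHom N : M →* M).ker :=
  Nat.finite_of_card_ne_zero ((natCard_ker_powMonoidHom N M).trans_ne (NeZero.ne N))

theorem fiberAverage_powMonoidHom {M 𝕜 : Type*} [CommGroup M] [HasEnoughRootsOfUnity M N]
    [RCLike 𝕜] (g : M → 𝕜) :
    fiberAverage (powMonoidHom N) g = fun z => (N : 𝕜)⁻¹ * ∑ᶠ w ∈ {w : M | w ^ N = z}, g w := by
  funext z
  rw [fiberAverage, natCard_ker_powMonoidHom]
  rfl

theorem circle_pow_surjective : Function.Surjective (powMonoidHom N : Circle →* Circle) :=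
  (Circle.isQuotientCoveringMap_npow N).surjective

theorem circle_measurePreserving_pow (μ : Measure Circle) [μ.IsHaarMeasure] :
    MeasurePreserving (powMonoidHom N : Circle →* Circle) μ μ :=
  MonoidHom.measurePreserving (continuous_pow N) (circle_pow_surjective N) rfl

end PowerMap

/- STATEMENT 4: For a continuous `m` on the circle and `(S f)(z) = m(z) f(z^N)` on
`L²(𝕋, μ)` (μ normalized Haar measure), the adjoint is given by
`(S* f)(z) = (1/N) ∑_{w^N = z} conj(m(w)) f(w)` for μ-a.e. `z`. -/
theorem stmt4 (N : ℕ) (hN : 2 ≤ N) (μ : Measure Circle) [μ.IsHaarMeasure]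
    [IsProbabilityMeasure μ]
    (m : Circle → ℂ) (hm : Continuous m)
    (S : Lp ℂ 2 μ →L[ℂ] Lp ℂ 2 μ)
    (hS : ∀ f : Lp ℂ 2 μ,
      (S f : Circle → ℂ) =ᵐ[μ] fun z => m z * (f : Circle → ℂ) (z ^ N)) :
    ∀ f : Lp ℂ 2 μ,
      (ContinuousLinearMap.adjoint S f : Circle → ℂ) =ᵐ[μ]
        fun z => (N : ℂ)⁻¹ *
          ∑ᶠ w ∈ {w : Circle | w ^ N = z}, (starRingEnd ℂ) (m w) * (f : Circle → ℂ) w := by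
  intro f
  have : NeZero N := ⟨by lia⟩
  have := finite_ker_powMonoidHom N Circle
  rw [← fiberAverage_powMonoidHom]
  exact stmt4_general (circle_measurePreserving_pow N μ) (circle_pow_surjective N) hS f
end

section
/- Let R = ℂ[z, z^{−1}] be the ring of Laurent polynomials over ℂ, and let A be a 2×2 matrix over R with det A = 1 (the constant Laurent polynomial 1). Then there exist m ∈ ℕ, a nonzero constant K ∈ ℂ \ {0}, and Laurent polynomials u_1, …, u_m, l_1, …, l_m ∈ R such that A = diag(K, K^{−1}) · ∏_{i=1}^{m} ( [[1, 0], [l_i, 1]] · [[1, u_i], [0, 1]] ), where the product is taken in order i = 1, …, m. -/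
/-!
Right multiplication by the rotation `!![0, 1; -1, 0]` and by upper unipotent matrices performs
Euclid's algorithm on the first row of a matrix. These factors are themselves products of lifting
steps, and so is every determinant one matrix whose first row begins with `0`, the situation in
which the algorithm stops. A Laurent polynomial row is a unit times a polynomial row, and the unit
is absorbed by a matrix `diag(v, v⁻¹)`, again a product of lifting steps (Whitehead's lemma).
In particular the factor `diag(K, K⁻¹)` can be dispensed with.
-/

open Matrix

section CommRing

variable {R : Type*} [CommRing R]

variable (R) in
/-- The monoid of products of lifting steps, a lifting step being a lower unipotent times an upper
unipotent `2 × 2` matrix. It is the elementary group `E₂(R)`, presented by the generators that the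
lifting factorization uses. -/
def liftingMonoid : Submonoid (Matrix (Fin 2) (Fin 2) R) :=
  Submonoid.closure (Set.range fun x : R × R => !![1, 0; x.1, 1] * !![1, x.2; 0, 1])

theorem exists_eq_prod_ofFn_of_mem_liftingMonoid {A : Matrix (Fin 2) (Fin 2) R}
    (hA : A ∈ liftingMonoid R) :
    ∃ (m : ℕ) (u l : Fin m → R),
      A = (List.ofFn fun i => !![1, 0; l i, 1] * !![1, u i; 0, 1]).prod := by
  rw [liftingMonoid, ← FreeMonoid.mrange_lift] at hA
  obtain ⟨steps, rfl⟩ := hA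
  refine ⟨steps.toList.length, fun i => (steps.toList.get i).2,
    fun i => (steps.toList.get i).1, ?_⟩
  rw [FreeMonoid.lift_apply, ← List.ofFn_getElem_eq_map]
  rfl

theorem lower_mul_upper_mem_liftingMonoid (l u : R) :
    !![1, 0; l, 1] * !![1, u; 0, 1] ∈ liftingMonoid R :=
  Submonoid.subset_closure ⟨(l, u), rfl⟩

theorem upper_mem_liftingMonoid (u : R) : !![1, u; 0, 1] ∈ liftingMonoid R := by
  simpa [← one_fin_two] using lower_mul_upper_mem_liftingMonoid 0 u

theorem mem_liftingMonoid_of_mul_eq_neg_one {b c : R} (hbc : b * c = -1) (d : R) :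
    !![0, b; c, d] ∈ liftingMonoid R := by
  have factorization : !![0, b; c, d] =
      !![1, b; 0, 1] * (!![1, 0; c, 1] * !![1, b * (1 - d); 0, 1]) := by
    simp only [mul_fin_two]
    congr! 5
    · linear_combination -hbc
    · linear_combination b * (d - 1) * hbc
    · ring
    · linear_combination (d - 1) * hbc
  rw [factorization]
  exact mul_mem (upper_mem_liftingMonoid b) (lower_mul_upper_mem_liftingMonoid c _)

theorem rotation_mem_liftingMonoid : !![0, 1; -1, 0] ∈ liftingMonoid R :=
  mem_liftingMonoid_of_mul_eq_neg_one (by ring) 0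

theorem diag_units_mem_liftingMonoid (v : Rˣ) :
    !![(v : R), 0; 0, (↑v⁻¹ : R)] ∈ liftingMonoid R := by
  have antidiagonal_mem : !![0, -(v : R); (↑v⁻¹ : R), 0] ∈ liftingMonoid R :=
    mem_liftingMonoid_of_mul_eq_neg_one (by simp) 0
  simpa using mul_mem antidiagonal_mem rotation_mem_liftingMonoid

/-- Every determinant one matrix with first row `(a, b)` is a product of lifting steps. Quantifying
over the second row leaves a property of the row on which Euclid's algorithm operates. -/
def IsLiftableRow (a b : R) : Prop :=
  ∀ c d : R, a * d - b * c = 1 → !![a, b; c, d] ∈ liftingMonoid R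

theorem isLiftableRow_zero_left (b : R) : IsLiftableRow 0 b := fun c d hdet =>
  mem_liftingMonoid_of_mul_eq_neg_one (by linear_combination -hdet) d

theorem IsLiftableRow.of_sub_mul {a b x : R} (h : IsLiftableRow (b - a * x) (-a)) :
    IsLiftableRow a b := by
  intro c d hdet
  have reduced_mem : !![b - a * x, -a; d - c * x, -c] ∈ liftingMonoid R :=
    h _ _ (by linear_combination hdet)
  simpa using mul_mem (mul_mem reduced_mem rotation_mem_liftingMonoid) (upper_mem_liftingMonoid x)

theorem IsLiftableRow.units_mul {a b : R} (h : IsLiftableRow a b) (v : Rˣ) :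
    IsLiftableRow (v * a) (v * b) := by
  intro c d hdet
  have unscaled_mem : !![a, b; v * c, v * d] ∈ liftingMonoid R :=
    h _ _ (by linear_combination hdet)
  simpa using mul_mem (diag_units_mem_liftingMonoid v) unscaled_mem

end CommRing

section EuclideanDomain

variable {R S : Type*} [EuclideanDomain R] [CommRing S]

theorem isLiftableRow_map (φ : R →+* S) (p q : R) : IsLiftableRow (φ p) (φ q) := by
  induction p using (EuclideanDomain.r_wellFounded (R := R)).induction generalizing q with
  | _ p ih =>
    rcases eq_or_ne p 0 with rfl | hp
    · simpa using isLiftableRow_zero_left (φ q)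
    · have mod_row : IsLiftableRow (φ (q % p)) (φ (-p)) := ih _ (EuclideanDomain.mod_lt q hp) _
      rw [EuclideanDomain.mod_eq_sub_mul_div, map_sub, map_mul, map_neg] at mod_row
      exact mod_row.of_sub_mul

theorem isLiftableRow_of_isLocalization [Algebra R S] (M : Submonoid R) [IsLocalization M S]
    (a b : S) : IsLiftableRow a b := by
  obtain ⟨p, q, s, hp, hq⟩ := IsLocalization.surj₂ M S a b
  obtain ⟨v, hv⟩ := IsLocalization.map_units S s
  rw [← hv, mul_comm] at hp hq
  have numerator_row : IsLiftableRow (v * a) (v * b) := by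
    rw [hp, hq]
    exact isLiftableRow_map (algebraMap R S) p q
  simpa using numerator_row.units_mul v⁻¹

theorem stmt14_general [Algebra R S] (M : Submonoid R) [IsLocalization M S]
    (A : Matrix (Fin 2) (Fin 2) S) (hA : A.det = 1) :
    ∃ (m : ℕ) (u l : Fin m → S),
      A = (List.ofFn fun i => !![1, 0; l i, 1] * !![1, u i; 0, 1]).prod := by
  apply exists_eq_prod_ofFn_of_mem_liftingMonoid
  rw [eta_fin_two A]
  exact isLiftableRow_of_isLocalization M _ _ _ _ (by rw [← det_fin_two, hA])

end EuclideanDomain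

theorem stmt14 (A : Matrix (Fin 2) (Fin 2) (LaurentPolynomial ℂ)) (hA : A.det = 1) :
    ∃ (m : ℕ) (K : ℂ), K ≠ 0 ∧
      ∃ u l : Fin m → LaurentPolynomial ℂ,
        A = Matrix.diagonal ![LaurentPolynomial.C K, LaurentPolynomial.C K⁻¹] *
          (List.ofFn (fun i : Fin m =>
            (!![1, 0; l i, 1] : Matrix (Fin 2) (Fin 2) (LaurentPolynomial ℂ)) *
              (!![1, u i; 0, 1] : Matrix (Fin 2) (Fin 2) (LaurentPolynomial ℂ)))).prod := by
  obtain ⟨m, u, l, hprod⟩ := stmt14_general (Submonoid.powers (Polynomial.X : Polynomial ℂ)) A hA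
  exact ⟨m, 1, one_ne_zero, u, l, by simpa [← one_fin_two, diagonal_fin_two] using hprod⟩
end
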